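/- arXiv:2202.12101 — 2 statements merged into one kernel-verified Lean document; each statement's English description precedes it below -/
import Mathlib

section
/- Let d₁, d₂ ≥ 1 be integers and s > 0. For bounded nonempty open connected sets Ω₁ ⊆ ℝ^{d₁} and Ω₂ ⊆ ℝ^{d₂}, the first Grushin eigenvalue of the product satisfies λ₁(Ω₁ × Ω₂) = E₁(μ₁(Ω₂), Ω₁); that is, the infimum over nonzero u ∈ C_c^∞(Ω₁ × Ω₂) of (∫_{Ω₁×Ω₂} |∇_{x₁}u|² + |x₁|^{2s}|∇_{x₂}u|² dx)/(∫_{Ω₁×Ω₂} u² dx) equals the infimum over nonzero f ∈ C_c^∞(Ω₁) of (∫_{Ω₁} |∇f|² + μ₁(Ω₂)|x₁|^{2s} f² dx₁)/(∫_{Ω₁} f² dx₁). -/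
open MeasureTheory Set Filter

/-- First Dirichlet eigenvalue (Rayleigh quotient infimum) of the Laplacian on `Ω ⊆ ℝ^d`. -/
noncomputable def dirichletMu1 (d : ℕ) (Ω : Set (EuclideanSpace ℝ (Fin d))) : ℝ :=
  sInf { q : ℝ | ∃ g : EuclideanSpace ℝ (Fin d) → ℝ,
    ContDiff ℝ (⊤ : ℕ∞) g ∧ HasCompactSupport g ∧ tsupport g ⊆ Ω ∧ g ≠ 0 ∧
    q = (∫ x in Ω, ‖gradient g x‖ ^ 2) / (∫ x in Ω, (g x) ^ 2) }

/-- First eigenvalue (Rayleigh quotient infimum) of the Schrödinger operator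
`-Δ + σ |x|^{2s}` on `Ω ⊆ ℝ^d`. -/
noncomputable def schrodingerE1 (d : ℕ) (s σ : ℝ) (Ω : Set (EuclideanSpace ℝ (Fin d))) : ℝ :=
  sInf { q : ℝ | ∃ f : EuclideanSpace ℝ (Fin d) → ℝ,
    ContDiff ℝ (⊤ : ℕ∞) f ∧ HasCompactSupport f ∧ tsupport f ⊆ Ω ∧ f ≠ 0 ∧
    q = (∫ x in Ω, (‖gradient f x‖ ^ 2 + σ * ‖x‖ ^ (2 * s) * (f x) ^ 2)) /
        (∫ x in Ω, (f x) ^ 2) }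

/-- First eigenvalue (Rayleigh quotient infimum) of the Grushin operator
`Δ_{x₁} + |x₁|^{2s} Δ_{x₂}` with Dirichlet conditions on
`Ω ⊆ ℝ^{d₁} × ℝ^{d₂}`. -/
noncomputable def grushinLambda1 (d₁ d₂ : ℕ) (s : ℝ)
    (Ω : Set (EuclideanSpace ℝ (Fin d₁) × EuclideanSpace ℝ (Fin d₂))) : ℝ :=
  sInf { q : ℝ | ∃ u : EuclideanSpace ℝ (Fin d₁) × EuclideanSpace ℝ (Fin d₂) → ℝ,
    ContDiff ℝ (⊤ : ℕ∞) u ∧ HasCompactSupport u ∧ tsupport u ⊆ Ω ∧ u ≠ 0 ∧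
    q = (∫ x in Ω, (‖gradient (fun y => u (y, x.2)) x.1‖ ^ 2
          + ‖x.1‖ ^ (2 * s) * ‖gradient (fun y => u (x.1, y)) x.2‖ ^ 2)) /
        (∫ x in Ω, (u x) ^ 2) }

/-!
Both inequalities come from separating variables. If `κ` is the Dirichlet eigenvalue of `Ω₂`, then
for fixed `x₁` it bounds the energy of `u (x₁, ·)` below by `κ ∫ u (x₁, ·)²`, so the Grushin energy
of `u` dominates the integral over `x₂` of the Schrödinger energies, with potential `κ w`, of the
slices `u (·, x₂)`. Conversely the Grushin energy of a product `f ⊗ g` is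
`(∫ |∇f|²) (∫ g²) + (∫ w f²) (∫ |∇g|²)`; dividing by `∫ g²` and minimising over `g` turns the
right-hand side into the Schrödinger energy of `f`.
-/

open TopologicalSpace
open scoped Distributions

section Forms

variable {E F : Type*} [NormedAddCommGroup E] [NormedSpace ℝ E] [MeasurableSpace E]
  [NormedAddCommGroup F] [NormedSpace ℝ F] [MeasurableSpace F]

/-- The quadratic form `∫ |∇f|² + V f²` of the Schrödinger operator `-Δ + V`. The gradient is
measured by the operator norm of the derivative. -/
noncomputable def schrodingerForm (μ : Measure E) (V f : E → ℝ) : ℝ :=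
  ∫ x, (‖fderiv ℝ f x‖ ^ 2 + V x * f x ^ 2) ∂μ

/-- The quadratic form `∫ |∇₁u|² + w(x₁) |∇₂u|²` of the Grushin operator with weight `w`. -/
noncomputable def grushinForm (μ : Measure (E × F)) (w : E → ℝ) (u : E × F → ℝ) : ℝ :=
  ∫ p, (‖fderiv ℝ (fun x => u (x, p.2)) p.1‖ ^ 2
    + w p.1 * ‖fderiv ℝ (fun y => u (p.1, y)) p.2‖ ^ 2) ∂μ

/-- The infimum of the Rayleigh quotient `Q f / ∫_Ω f²` over nonzero test functions on `Ω`;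
the junk value `0` if there are none. -/
noncomputable def rayleighInf (μ : Measure E) (Ω : Opens E) (Q : (E → ℝ) → ℝ) : ℝ :=
  ⨅ f : {f : 𝓓(Ω, ℝ) // f ≠ 0}, Q f.1 / ∫ x in Ω, f.1 x ^ 2 ∂μ

/-- The bottom of the Dirichlet spectrum of `-Δ + V` on `Ω`; for `V = 0` this is the first
Dirichlet eigenvalue of the Laplacian. -/
noncomputable def schrodingerBottom (μ : Measure E) (V : E → ℝ) (Ω : Opens E) : ℝ :=
  rayleighInf μ Ω (schrodingerForm (μ.restrict Ω) V)

/-- The bottom of the Dirichlet spectrum of the Grushin operator with weight `w` on `Ω`. -/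
noncomputable def grushinBottom (μ : Measure (E × F)) (w : E → ℝ) (Ω : Opens (E × F)) : ℝ :=
  rayleighInf μ Ω (grushinForm (μ.restrict Ω) w)

lemma schrodingerForm_zero (μ : Measure E) (f : E → ℝ) :
    schrodingerForm μ 0 f = ∫ x, ‖fderiv ℝ f x‖ ^ 2 ∂μ := by
  simp [schrodingerForm]

lemma schrodingerForm_nonneg (μ : Measure E) {V : E → ℝ} (hV : 0 ≤ V) (f : E → ℝ) :
    0 ≤ schrodingerForm μ V f :=
  integral_nonneg fun x => add_nonneg (sq_nonneg _) (mul_nonneg (hV x) (sq_nonneg _))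

lemma grushinForm_nonneg (μ : Measure (E × F)) {w : E → ℝ} (hw : 0 ≤ w) (u : E × F → ℝ) :
    0 ≤ grushinForm μ w u :=
  integral_nonneg fun p => add_nonneg (sq_nonneg _) (mul_nonneg (hw p.1) (sq_nonneg _))

end Forms

section TestFunctions

variable {E : Type*} [NormedAddCommGroup E] [NormedSpace ℝ E] {Ω : Opens E}

lemma exists_testFunction_ne_zero [FiniteDimensional ℝ E] (hΩ : (Ω : Set E).Nonempty) :
    ∃ f : 𝓓(Ω, ℝ), f ≠ 0 := by
  obtain ⟨x, hx⟩ := hΩ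
  obtain ⟨f, hfΩ, hfc, hf, -, hfx⟩ :=
    exists_contDiff_tsupport_subset (n := ⊤) (Ω.isOpen.mem_nhds hx)
  exact ⟨⟨f, hf, hfc, hfΩ⟩, DFunLike.ne_iff.2 ⟨x, by simp [hfx]⟩⟩

lemma hasCompactSupport_sq (f : 𝓓(Ω, ℝ)) : HasCompactSupport fun x => f x ^ 2 :=
  f.hasCompactSupport.comp_left (g := fun t : ℝ => t ^ 2) (by simp)

end TestFunctions

section RayleighQuotient

variable {E : Type*} [NormedAddCommGroup E] [NormedSpace ℝ E] [MeasurableSpace E]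
  {μ : Measure E} {Ω : Opens E} {Q : (E → ℝ) → ℝ}

lemma rayleighInf_eq_sInf (μ : Measure E) (Ω : Opens E) (Q : (E → ℝ) → ℝ) :
    rayleighInf μ Ω Q = sInf {q : ℝ | ∃ f : E → ℝ, ContDiff ℝ (⊤ : ℕ∞) f ∧ HasCompactSupport f ∧
      tsupport f ⊆ Ω ∧ f ≠ 0 ∧ q = Q f / ∫ x in Ω, f x ^ 2 ∂μ} := by
  refine congrArg sInf (Set.ext fun q => ⟨?_, ?_⟩)
  · rintro ⟨⟨f, hf⟩, rfl⟩
    exact ⟨f, f.contDiff, f.hasCompactSupport, f.tsupport_subset,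
      fun h => hf (DFunLike.ext' h), rfl⟩
  · rintro ⟨f, hf, hfc, hfΩ, hf0, rfl⟩
    exact ⟨⟨⟨f, hf, hfc, hfΩ⟩, fun h => hf0 (congrArg DFunLike.coe h)⟩, rfl⟩

lemma rayleighInf_nonneg (hQ : ∀ f, 0 ≤ Q f) : 0 ≤ rayleighInf μ Ω Q :=
  Real.iInf_nonneg fun _ => div_nonneg (hQ _) (integral_nonneg fun _ => sq_nonneg _)

lemma setIntegral_sq_pos [OpensMeasurableSpace E] [IsFiniteMeasureOnCompacts μ]
    [μ.IsOpenPosMeasure] {f : 𝓓(Ω, ℝ)} (hf : f ≠ 0) : 0 < ∫ x in Ω, f x ^ 2 ∂μ := by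
  obtain ⟨x, hx⟩ := DFunLike.ne_iff.1 hf
  have vanishes_off : ∀ x ∉ Ω, f x ^ 2 = 0 := fun x hx => by
    simp [image_eq_zero_of_notMem_tsupport fun h => hx (f.tsupport_subset h)]
  rw [setIntegral_eq_integral_of_forall_compl_eq_zero vanishes_off]
  exact Continuous.integral_pos_of_hasCompactSupport_nonneg_nonzero (x := x) (by fun_prop)
    (hasCompactSupport_sq f) (fun y => sq_nonneg _) (pow_ne_zero 2 hx)

lemma rayleighInf_mul_setIntegral_sq_le [OpensMeasurableSpace E] [IsFiniteMeasureOnCompacts μ]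
    [μ.IsOpenPosMeasure] (hQ : ∀ f, 0 ≤ Q f) (f : 𝓓(Ω, ℝ)) :
    rayleighInf μ Ω Q * ∫ x in Ω, f x ^ 2 ∂μ ≤ Q f := by
  obtain rfl | hf := eq_or_ne f 0
  · simpa using hQ _
  rw [← le_div_iff₀ (setIntegral_sq_pos hf)]
  refine ciInf_le (f := fun f : {f : 𝓓(Ω, ℝ) // f ≠ 0} => Q f.1 / ∫ x in Ω, f.1 x ^ 2 ∂μ)
    ⟨0, ?_⟩ ⟨f, hf⟩
  rintro _ ⟨g, rfl⟩
  exact div_nonneg (hQ _) (integral_nonneg fun _ => sq_nonneg _)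

lemma le_mul_rayleighInf [OpensMeasurableSpace E] [IsFiniteMeasureOnCompacts μ]
    [μ.IsOpenPosMeasure] [FiniteDimensional ℝ E] (hΩ : (Ω : Set E).Nonempty) {a c : ℝ}
    (ha : 0 ≤ a) (h : ∀ f : 𝓓(Ω, ℝ), c * ∫ x in Ω, f x ^ 2 ∂μ ≤ a * Q f) :
    c ≤ a * rayleighInf μ Ω Q := by
  obtain ⟨f, hf⟩ := exists_testFunction_ne_zero hΩ
  have : Nonempty {f : 𝓓(Ω, ℝ) // f ≠ 0} := ⟨f, hf⟩
  rw [rayleighInf, Real.mul_iInf_of_nonneg ha]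
  refine le_ciInf fun g => ?_
  rw [← mul_div_assoc, le_div_iff₀ (setIntegral_sq_pos g.2)]
  exact h g.1

lemma le_rayleighInf [OpensMeasurableSpace E] [IsFiniteMeasureOnCompacts μ]
    [μ.IsOpenPosMeasure] [FiniteDimensional ℝ E] (hΩ : (Ω : Set E).Nonempty) {c : ℝ}
    (h : ∀ f : 𝓓(Ω, ℝ), c * ∫ x in Ω, f x ^ 2 ∂μ ≤ Q f) : c ≤ rayleighInf μ Ω Q := by
  simpa using le_mul_rayleighInf hΩ zero_le_one (by simpa using h)

end RayleighQuotient

section Integrability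

variable {E : Type*} [NormedAddCommGroup E] [NormedSpace ℝ E] [MeasurableSpace E]
  [OpensMeasurableSpace E] {μ : Measure E} {V : E → ℝ} {Ω : Opens E}

lemma integrable_mul_sq (hV : LocallyIntegrable V μ) (f : 𝓓(Ω, ℝ)) :
    Integrable (fun x => V x * f x ^ 2) μ :=
  hV.integrable_smul_right_of_hasCompactSupport (by fun_prop) (hasCompactSupport_sq f)

lemma integrable_sq [IsFiniteMeasureOnCompacts μ] (f : 𝓓(Ω, ℝ)) :
    Integrable (fun x => f x ^ 2) μ :=
  Continuous.integrable_of_hasCompactSupport (by fun_prop) (hasCompactSupport_sq f)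

lemma integrable_norm_fderiv_sq [IsFiniteMeasureOnCompacts μ] (f : 𝓓(Ω, ℝ)) :
    Integrable (fun x => ‖fderiv ℝ f x‖ ^ 2) μ :=
  Continuous.integrable_of_hasCompactSupport ((f.contDiff.continuous_fderiv (by simp)).norm.pow 2)
    ((f.hasCompactSupport.fderiv ℝ).comp_left (g := fun L => ‖L‖ ^ 2) (by simp))

lemma schrodingerForm_smul [IsFiniteMeasureOnCompacts μ] (hV : LocallyIntegrable V μ) (c : ℝ)
    (f : 𝓓(Ω, ℝ)) :
    schrodingerForm μ (c • V) f = schrodingerForm μ 0 f + c * ∫ x, V x * f x ^ 2 ∂μ := by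
  rw [schrodingerForm_zero, ← integral_const_mul,
    ← integral_add (integrable_norm_fderiv_sq f) ((integrable_mul_sq hV f).const_mul c)]
  simp only [schrodingerForm, Pi.smul_apply, smul_eq_mul, mul_assoc]

end Integrability

section Fubini

variable {α β : Type*} [MeasurableSpace α] [MeasurableSpace β] {μ : Measure α} {ν : Measure β}
  [SFinite μ] [SFinite ν] {f g : α × β → ℝ}

lemma integral_prod_mono_of_slice_left (hf : Integrable f (μ.prod ν)) (hg : Integrable g (μ.prod ν))
    (h : ∀ x, ∫ y, f (x, y) ∂ν ≤ ∫ y, g (x, y) ∂ν) :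
    ∫ p, f p ∂(μ.prod ν) ≤ ∫ p, g p ∂(μ.prod ν) := by
  rw [integral_prod _ hf, integral_prod _ hg]
  exact integral_mono hf.integral_prod_left hg.integral_prod_left h

lemma integral_prod_mono_of_slice_right (hf : Integrable f (μ.prod ν))
    (hg : Integrable g (μ.prod ν)) (h : ∀ y, ∫ x, f (x, y) ∂μ ≤ ∫ x, g (x, y) ∂μ) :
    ∫ p, f p ∂(μ.prod ν) ≤ ∫ p, g p ∂(μ.prod ν) := by
  rw [integral_prod_symm _ hf, integral_prod_symm _ hg]
  exact integral_mono hf.integral_prod_right hg.integral_prod_right h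

lemma locallyIntegrable_comp_fst [TopologicalSpace α] [TopologicalSpace β]
    [IsLocallyFiniteMeasure ν] {w : α → ℝ} (hw : LocallyIntegrable w μ) :
    LocallyIntegrable (fun p : α × β => w p.1) (μ.prod ν) := by
  rintro ⟨x, y⟩
  obtain ⟨U, hU, hwU⟩ := hw x
  obtain ⟨V, hV, hνV⟩ := ν.finiteAt_nhds y
  have : IsFiniteMeasure (ν.restrict V) := isFiniteMeasure_restrict.2 hνV.ne
  refine ⟨U ×ˢ V, prod_mem_nhds hU hV, ?_⟩
  rw [IntegrableOn, ← Measure.prod_restrict]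
  exact Integrable.comp_fst hwU _

end Fubini

section PartialDerivatives

variable {𝕜 E F G : Type*} [NontriviallyNormedField 𝕜] [NormedAddCommGroup E] [NormedSpace 𝕜 E]
  [NormedAddCommGroup F] [NormedSpace 𝕜 F] [NormedAddCommGroup G] [NormedSpace 𝕜 G]
  {u : E × F → G} {p : E × F}

lemma fderiv_slice_fst (hu : DifferentiableAt 𝕜 u p) :
    fderiv 𝕜 (fun x => u (x, p.2)) p.1 = (fderiv 𝕜 u p).comp (.inl 𝕜 E F) :=
  (hu.hasFDerivAt.comp p.1 (f := fun x => (x, p.2)) (hasFDerivAt_prodMk_left p.1 p.2)).fderiv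

lemma fderiv_slice_snd (hu : DifferentiableAt 𝕜 u p) :
    fderiv 𝕜 (fun y => u (p.1, y)) p.2 = (fderiv 𝕜 u p).comp (.inr 𝕜 E F) :=
  (hu.hasFDerivAt.comp p.2 (f := fun y => (p.1, y)) (hasFDerivAt_prodMk_right p.1 p.2)).fderiv

end PartialDerivatives

section OpensProd

variable {X Y : Type*} [TopologicalSpace X] [TopologicalSpace Y]

/-- The product `U × V` of two open sets, as an open set. -/
def opensProd (U : Opens X) (V : Opens Y) : Opens (X × Y) :=
  ⟨U ×ˢ V, U.isOpen.prod V.isOpen⟩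

lemma restrict_opensProd [MeasurableSpace X] [MeasurableSpace Y] (μ : Measure X) (ν : Measure Y)
    [SFinite μ] [SFinite ν] (U : Opens X) (V : Opens Y) :
    (μ.prod ν).restrict (opensProd U V) = (μ.restrict U).prod (ν.restrict V) :=
  (Measure.prod_restrict _ _).symm

lemma tsupport_mul_prod_subset (f : X → ℝ) (g : Y → ℝ) :
    tsupport (fun p : X × Y => f p.1 * g p.2) ⊆ tsupport f ×ˢ tsupport g :=
  closure_minimal
    (fun _ hp => ⟨subset_tsupport f (left_ne_zero_of_mul hp),
      subset_tsupport g (right_ne_zero_of_mul hp)⟩)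
    ((isClosed_tsupport f).prod (isClosed_tsupport g))

end OpensProd

section Product

variable {E F : Type*} [NormedAddCommGroup E] [NormedSpace ℝ E] [NormedAddCommGroup F]
  [NormedSpace ℝ F] {Ω₁ : Opens E} {Ω₂ : Opens F}

/-- The slice `u (·, y)` of a test function on a product, as a test function on the first
factor. -/
noncomputable def sliceFst (u : 𝓓(opensProd Ω₁ Ω₂, ℝ)) (y : F) : 𝓓(Ω₁, ℝ) where
  toFun x := u (x, y)
  contDiff' := u.contDiff.comp (contDiff_id.prodMk contDiff_const)
  hasCompactSupport' := .intro (u.hasCompactSupport.isCompact.image continuous_fst)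
    fun _ hx => image_eq_zero_of_notMem_tsupport fun h => hx ⟨_, h, rfl⟩
  tsupport_subset' _ hx :=
    (u.tsupport_subset (tsupport_comp_subset_preimage u (Continuous.prodMk_left y) hx)).1

/-- The slice `u (x, ·)` of a test function on a product, as a test function on the second
factor. -/
noncomputable def sliceSnd (u : 𝓓(opensProd Ω₁ Ω₂, ℝ)) (x : E) : 𝓓(Ω₂, ℝ) where
  toFun y := u (x, y)
  contDiff' := u.contDiff.comp (contDiff_const.prodMk contDiff_id)
  hasCompactSupport' := .intro (u.hasCompactSupport.isCompact.image continuous_snd)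
    fun _ hy => image_eq_zero_of_notMem_tsupport fun h => hy ⟨_, h, rfl⟩
  tsupport_subset' _ hy :=
    (u.tsupport_subset (tsupport_comp_subset_preimage u (Continuous.prodMk_right x) hy)).2

/-- The tensor product `(f ⊗ g) (x, y) = f x * g y` of two test functions. -/
noncomputable def tensor (f : 𝓓(Ω₁, ℝ)) (g : 𝓓(Ω₂, ℝ)) : 𝓓(opensProd Ω₁ Ω₂, ℝ) where
  toFun p := f p.1 * g p.2
  contDiff' := (f.contDiff.comp contDiff_fst).mul (g.contDiff.comp contDiff_snd)
  hasCompactSupport' :=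
    (f.hasCompactSupport.isCompact.prod g.hasCompactSupport.isCompact).of_isClosed_subset
      (isClosed_tsupport _) (tsupport_mul_prod_subset f g)
  tsupport_subset' :=
    (tsupport_mul_prod_subset f g).trans (Set.prod_mono f.tsupport_subset g.tsupport_subset)

variable [MeasurableSpace E] [MeasurableSpace F]

lemma integral_tensor_sq {μ : Measure E} {ν : Measure F} [SFinite μ] [SFinite ν] (f : 𝓓(Ω₁, ℝ))
    (g : 𝓓(Ω₂, ℝ)) :
    ∫ p, tensor f g p ^ 2 ∂(μ.prod ν) = (∫ x, f x ^ 2 ∂μ) * ∫ y, g y ^ 2 ∂ν := by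
  rw [← integral_prod_mul]
  exact integral_congr_ae (.of_forall fun p => mul_pow _ _ 2)

variable [OpensMeasurableSpace E] [OpensMeasurableSpace F] {w : E → ℝ}

section PartialIntegrability

variable [SecondCountableTopologyEither E F] {μ : Measure (E × F)}

lemma integrable_norm_fderiv_fst_sq [IsFiniteMeasureOnCompacts μ] (u : 𝓓(opensProd Ω₁ Ω₂, ℝ)) :
    Integrable (fun p => ‖fderiv ℝ (fun x => u (x, p.2)) p.1‖ ^ 2) μ := by
  have hu := u.contDiff.continuous_fderiv (by simp)
  simp only [fderiv_slice_fst (u.contDiff.differentiable (by simp) _)]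
  exact Continuous.integrable_of_hasCompactSupport (by fun_prop)
    ((u.hasCompactSupport.fderiv ℝ).comp_left
      (g := fun L : E × F →L[ℝ] ℝ => ‖L.comp (.inl ℝ E F)‖ ^ 2) (by simp))

lemma integrable_mul_norm_fderiv_snd_sq (hw : LocallyIntegrable (fun p : E × F => w p.1) μ)
    (u : 𝓓(opensProd Ω₁ Ω₂, ℝ)) :
    Integrable (fun p => w p.1 * ‖fderiv ℝ (fun y => u (p.1, y)) p.2‖ ^ 2) μ := by
  have hu := u.contDiff.continuous_fderiv (by simp)
  simp only [fderiv_slice_snd (u.contDiff.differentiable (by simp) _)]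
  exact hw.integrable_smul_right_of_hasCompactSupport (by fun_prop)
    ((u.hasCompactSupport.fderiv ℝ).comp_left
      (g := fun L : E × F →L[ℝ] ℝ => ‖L.comp (.inr ℝ E F)‖ ^ 2) (by simp))

end PartialIntegrability

variable {μ : Measure E} {ν : Measure F}

lemma grushinForm_tensor [SFinite μ] [SFinite ν] [IsFiniteMeasureOnCompacts μ]
    [IsFiniteMeasureOnCompacts ν] (hw : LocallyIntegrable w μ) (f : 𝓓(Ω₁, ℝ)) (g : 𝓓(Ω₂, ℝ)) :
    grushinForm (μ.prod ν) w (tensor f g) =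
      schrodingerForm μ 0 f * (∫ y, g y ^ 2 ∂ν) +
        (∫ x, w x * f x ^ 2 ∂μ) * schrodingerForm ν 0 g := by
  have fst_part (p : E × F) : ‖fderiv ℝ (fun x => f x * g p.2) p.1‖ ^ 2 =
      ‖fderiv ℝ f p.1‖ ^ 2 * g p.2 ^ 2 := by
    rw [fderiv_mul_const (f.contDiff.differentiable (by simp) _), norm_smul, mul_pow,
      Real.norm_eq_abs, sq_abs, mul_comm]
  have snd_part (p : E × F) : w p.1 * ‖fderiv ℝ (fun y => f p.1 * g y) p.2‖ ^ 2 =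
      (w p.1 * f p.1 ^ 2) * ‖fderiv ℝ g p.2‖ ^ 2 := by
    rw [fderiv_const_mul (g.contDiff.differentiable (by simp) _), norm_smul, mul_pow,
      Real.norm_eq_abs, sq_abs, mul_assoc]
  calc grushinForm (μ.prod ν) w (tensor f g)
      = ∫ p, (‖fderiv ℝ f p.1‖ ^ 2 * g p.2 ^ 2 + (w p.1 * f p.1 ^ 2) * ‖fderiv ℝ g p.2‖ ^ 2)
          ∂(μ.prod ν) :=
        integral_congr_ae (.of_forall fun p => congrArg₂ _ (fst_part p) (snd_part p))
    _ = _ := by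
        rw [integral_add ((integrable_norm_fderiv_sq f).mul_prod (integrable_sq g))
          ((integrable_mul_sq hw f).mul_prod (integrable_norm_fderiv_sq g)),
          integral_prod_mul (fun x => ‖fderiv ℝ f x‖ ^ 2) (fun y => g y ^ 2),
          integral_prod_mul (fun x => w x * f x ^ 2) (fun y => ‖fderiv ℝ g y‖ ^ 2),
          schrodingerForm_zero, schrodingerForm_zero]

variable [SecondCountableTopologyEither E F] [SFinite μ] [SFinite ν] [IsLocallyFiniteMeasure μ]
  [IsLocallyFiniteMeasure ν]

lemma mul_integral_sq_le_grushinForm (hw₀ : 0 ≤ w) (hw : LocallyIntegrable w μ)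
    (u : 𝓓(opensProd Ω₁ Ω₂, ℝ)) {c κ : ℝ}
    (hκ : ∀ x, κ * ∫ y, u (x, y) ^ 2 ∂ν ≤ schrodingerForm ν 0 fun y => u (x, y))
    (hc : ∀ y, c * ∫ x, u (x, y) ^ 2 ∂μ ≤ schrodingerForm μ (κ • w) fun x => u (x, y)) :
    c * ∫ p, u p ^ 2 ∂(μ.prod ν) ≤ grushinForm (μ.prod ν) w u := by
  have hwp : LocallyIntegrable (fun p : E × F => w p.1) (μ.prod ν) := locallyIntegrable_comp_fst hw
  have int_fst := integrable_norm_fderiv_fst_sq (μ := μ.prod ν) u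
  have int_snd := integrable_mul_norm_fderiv_snd_sq hwp u
  have int_pot := (integrable_mul_sq hwp u).const_mul κ
  calc c * ∫ p, u p ^ 2 ∂(μ.prod ν)
      = ∫ p, c * u p ^ 2 ∂(μ.prod ν) := (integral_const_mul _ _).symm
    _ ≤ ∫ p, (‖fderiv ℝ (fun x => u (x, p.2)) p.1‖ ^ 2 + κ * (w p.1 * u p ^ 2)) ∂(μ.prod ν) := by
        refine integral_prod_mono_of_slice_right ((integrable_sq u).const_mul c)
          (int_fst.add int_pot) fun y => ?_
        simpa only [schrodingerForm, Pi.smul_apply, smul_eq_mul, mul_assoc, integral_const_mul]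
          using hc y
    _ = (∫ p, ‖fderiv ℝ (fun x => u (x, p.2)) p.1‖ ^ 2 ∂(μ.prod ν)) +
          ∫ p, κ * (w p.1 * u p ^ 2) ∂(μ.prod ν) := integral_add int_fst int_pot
    _ ≤ (∫ p, ‖fderiv ℝ (fun x => u (x, p.2)) p.1‖ ^ 2 ∂(μ.prod ν)) +
          ∫ p, w p.1 * ‖fderiv ℝ (fun y => u (p.1, y)) p.2‖ ^ 2 ∂(μ.prod ν) := by
        gcongr 1
        refine integral_prod_mono_of_slice_left int_pot int_snd fun x => ?_
        simpa only [schrodingerForm_zero, integral_const_mul, mul_left_comm κ]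
          using mul_le_mul_of_nonneg_left (hκ x) (hw₀ x)
    _ = grushinForm (μ.prod ν) w u := (integral_add int_fst int_snd).symm

end Product

section ProductFormula

variable {E F : Type*} [NormedAddCommGroup E] [NormedSpace ℝ E] [FiniteDimensional ℝ E]
  [MeasurableSpace E] [OpensMeasurableSpace E] [NormedAddCommGroup F] [NormedSpace ℝ F]
  [FiniteDimensional ℝ F] [MeasurableSpace F] [OpensMeasurableSpace F]
  {μ : Measure E} [IsLocallyFiniteMeasure μ] [μ.IsOpenPosMeasure]
  {ν : Measure F} [IsLocallyFiniteMeasure ν] [ν.IsOpenPosMeasure]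
  {w : E → ℝ} {Ω₁ : Opens E} {Ω₂ : Opens F}

lemma schrodingerBottom_le_grushinBottom (hw₀ : 0 ≤ w) (hw : LocallyIntegrable w μ)
    (hΩ₁ : (Ω₁ : Set E).Nonempty) (hΩ₂ : (Ω₂ : Set F).Nonempty) :
    schrodingerBottom μ (schrodingerBottom ν 0 Ω₂ • w) Ω₁ ≤
      grushinBottom (μ.prod ν) w (opensProd Ω₁ Ω₂) := by
  have hκ : 0 ≤ schrodingerBottom ν 0 Ω₂ :=
    rayleighInf_nonneg fun f => schrodingerForm_nonneg _ le_rfl f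
  refine le_rayleighInf (hΩ₁.prod hΩ₂) fun u => ?_
  rw [restrict_opensProd]
  exact mul_integral_sq_le_grushinForm hw₀ (hw.mono_measure Measure.restrict_le_self) u
    (fun x => rayleighInf_mul_setIntegral_sq_le
      (fun f => schrodingerForm_nonneg _ le_rfl f) (sliceSnd u x))
    (fun y => rayleighInf_mul_setIntegral_sq_le
      (fun f => schrodingerForm_nonneg _ (smul_nonneg hκ hw₀) f) (sliceFst u y))

lemma grushinBottom_le_schrodingerBottom (hw₀ : 0 ≤ w) (hw : LocallyIntegrable w μ)
    (hΩ₁ : (Ω₁ : Set E).Nonempty) (hΩ₂ : (Ω₂ : Set F).Nonempty) :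
    grushinBottom (μ.prod ν) w (opensProd Ω₁ Ω₂) ≤
      schrodingerBottom μ (schrodingerBottom ν 0 Ω₂ • w) Ω₁ := by
  have hwΩ : LocallyIntegrable w (μ.restrict Ω₁) := hw.mono_measure Measure.restrict_le_self
  refine le_rayleighInf hΩ₁ fun f => ?_
  rw [schrodingerForm_smul hwΩ, ← sub_le_iff_le_add', mul_comm (schrodingerBottom _ _ _)]
  refine le_mul_rayleighInf hΩ₂
    (integral_nonneg fun x => mul_nonneg (hw₀ x) (sq_nonneg _)) fun g => ?_
  have test_tensor : grushinBottom (μ.prod ν) w (opensProd Ω₁ Ω₂) *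
      ((∫ x in Ω₁, f x ^ 2 ∂μ) * ∫ y in Ω₂, g y ^ 2 ∂ν) ≤
      schrodingerForm (μ.restrict Ω₁) 0 f * (∫ y in Ω₂, g y ^ 2 ∂ν) +
        (∫ x in Ω₁, w x * f x ^ 2 ∂μ) * schrodingerForm (ν.restrict Ω₂) 0 g := by
    rw [← grushinForm_tensor hwΩ, ← integral_tensor_sq, ← restrict_opensProd]
    exact rayleighInf_mul_setIntegral_sq_le (fun u => grushinForm_nonneg _ hw₀ u) (tensor f g)
  linarith

theorem grushin_lambda1_product_eq_general (hw₀ : 0 ≤ w) (hw : LocallyIntegrable w μ)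
    (hΩ₁ : (Ω₁ : Set E).Nonempty) (hΩ₂ : (Ω₂ : Set F).Nonempty) :
    grushinBottom (μ.prod ν) w (opensProd Ω₁ Ω₂) =
      schrodingerBottom μ (schrodingerBottom ν 0 Ω₂ • w) Ω₁ :=
  (grushinBottom_le_schrodingerBottom hw₀ hw hΩ₁ hΩ₂).antisymm
    (schrodingerBottom_le_grushinBottom hw₀ hw hΩ₁ hΩ₂)

end ProductFormula

section Euclidean

lemma norm_gradient {E : Type*} [NormedAddCommGroup E] [InnerProductSpace ℝ E] [CompleteSpace E]
    (f : E → ℝ) (x : E) : ‖gradient f x‖ = ‖fderiv ℝ f x‖ :=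
  LinearIsometryEquiv.norm_map _ _

lemma locallyIntegrable_norm_rpow {E : Type*} [NormedAddCommGroup E] [MeasurableSpace E]
    [OpensMeasurableSpace E] [SecondCountableTopology E] {μ : Measure E}
    [IsLocallyFiniteMeasure μ] {r : ℝ} (hr : 0 ≤ r) : LocallyIntegrable (fun x : E => ‖x‖ ^ r) μ :=
  (continuous_norm.rpow_const fun _ => Or.inr hr).locallyIntegrable

variable {d d₁ d₂ : ℕ}

lemma dirichletMu1_eq_schrodingerBottom {Ω : Set (EuclideanSpace ℝ (Fin d))} (hΩ : IsOpen Ω) :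
    dirichletMu1 d Ω = schrodingerBottom volume 0 ⟨Ω, hΩ⟩ := by
  simp only [dirichletMu1, norm_gradient, schrodingerBottom, rayleighInf_eq_sInf,
    schrodingerForm_zero, Opens.coe_mk]

lemma schrodingerE1_eq_schrodingerBottom (s σ : ℝ) {Ω : Set (EuclideanSpace ℝ (Fin d))}
    (hΩ : IsOpen Ω) :
    schrodingerE1 d s σ Ω = schrodingerBottom volume (σ • fun x => ‖x‖ ^ (2 * s)) ⟨Ω, hΩ⟩ := by
  simp only [schrodingerE1, norm_gradient, schrodingerBottom, rayleighInf_eq_sInf,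
    schrodingerForm, Pi.smul_apply, smul_eq_mul, Opens.coe_mk]

lemma grushinLambda1_eq_grushinBottom (s : ℝ)
    {Ω : Set (EuclideanSpace ℝ (Fin d₁) × EuclideanSpace ℝ (Fin d₂))} (hΩ : IsOpen Ω) :
    grushinLambda1 d₁ d₂ s Ω = grushinBottom volume (fun x => ‖x‖ ^ (2 * s)) ⟨Ω, hΩ⟩ := by
  simp only [grushinLambda1, norm_gradient, grushinBottom, rayleighInf_eq_sInf, grushinForm,
    Opens.coe_mk]

end Euclidean

/-- for bounded nonempty open connected `Ω₁ ⊆ ℝ^{d₁}`, `Ω₂ ⊆ ℝ^{d₂}`,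
`λ₁(Ω₁ × Ω₂) = E₁(μ₁(Ω₂), Ω₁)`. -/
theorem grushin_lambda1_product_eq (d₁ d₂ : ℕ) (hd₁ : 1 ≤ d₁) (hd₂ : 1 ≤ d₂)
    (s : ℝ) (hs : 0 < s)
    (Ω₁ : Set (EuclideanSpace ℝ (Fin d₁))) (Ω₂ : Set (EuclideanSpace ℝ (Fin d₂)))
    (hΩ₁open : IsOpen Ω₁) (hΩ₁conn : IsConnected Ω₁) (hΩ₁bd : Bornology.IsBounded Ω₁)
    (hΩ₂open : IsOpen Ω₂) (hΩ₂conn : IsConnected Ω₂) (hΩ₂bd : Bornology.IsBounded Ω₂) :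
    grushinLambda1 d₁ d₂ s (Ω₁ ×ˢ Ω₂) = schrodingerE1 d₁ s (dirichletMu1 d₂ Ω₂) Ω₁ := by
  rw [dirichletMu1_eq_schrodingerBottom hΩ₂open, schrodingerE1_eq_schrodingerBottom _ _ hΩ₁open,
    grushinLambda1_eq_grushinBottom _ (hΩ₁open.prod hΩ₂open)]
  exact grushin_lambda1_product_eq_general (Ω₁ := ⟨Ω₁, hΩ₁open⟩) (Ω₂ := ⟨Ω₂, hΩ₂open⟩)
    (fun x => by positivity) (locallyIntegrable_norm_rpow (by positivity)) hΩ₁conn.nonempty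
    hΩ₂conn.nonempty
end

section
/- Let d₁, d₂ ≥ 1 be integers and s > 0. Define F(σ) := σ^{-d₂/(d₁+(1+s)d₂)} · E₁(σ, B₁) for σ ∈ (0,+∞), where B₁ is the ball in ℝ^{d₁} of volume 1 centered at the origin. Then F(σ) → +∞ as σ → 0⁺, F(σ) → +∞ as σ → +∞, and F attains a global minimum on (0,+∞): there exists σ* > 0 with F(σ*) ≤ F(σ) for all σ > 0. -/
open MeasureTheory Set Filter

/-!
Integrating `cos (L x / ρ) * f x ^ 2` by parts in a unit direction dual to the functional `L`, where
`cos (t / ρ)` is the derivative of the bounded function `ρ * sin (t / ρ)`, gives the localization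
inequality `∫ f² ≤ 16 ρ² ∫ ‖Df‖² + 6 ∫_{‖x‖ > ρ} f²`. If `f` lives in the ball of radius `ρ` this is
a Poincaré inequality, so `E₁` is bounded below uniformly in `σ`. Otherwise `1 ≤ (‖x‖ / ρ) ^ (2s)`
off the ball turns it into an uncertainty principle, and `ρ = σ ^ (-1 / (2(1+s)))` gives
`E₁ ≥ σ ^ (1/(1+s)) / 16`. The rescaling exponent lies strictly between `-1/(1+s)` and `0`, so
the first bound forces the blow-up at `0` and the second the blow-up at infinity. The minimum exists
because `E₁` is concave in `σ`, as an infimum of affine functions, and hence continuous.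
-/

lemma one_half_le_cos_of_abs_le_one {t : ℝ} (ht : |t| ≤ 1) : 1 / 2 ≤ Real.cos t := by
  have := (sq_le_one_iff_abs_le_one t).2 ht
  linarith [Real.one_sub_sq_div_two_le_cos (x := t)]

lemma neg_one_div_lt_neg_div_add_mul {x y c : ℝ} (hx : 0 < x) (hy : 0 < y) (hc : 0 < c) :
    -(1 / c) < -y / (x + c * y) := by
  rw [neg_div, neg_lt_neg_iff, div_lt_div_iff₀ (by positivity) hc]
  linarith

lemma exists_forall_Ioi_le_of_tendsto_atTop {β : Type*} [LinearOrder β] [TopologicalSpace β]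
    [ClosedIicTopology β] {F : ℝ → β} (hF : ContinuousOn F (Ioi 0))
    (h0 : Tendsto F (nhdsWithin 0 (Ioi 0)) atTop) (htop : Tendsto F atTop atTop) :
    ∃ a, 0 < a ∧ ∀ b, 0 < b → F a ≤ F b := by
  have hcont : Continuous fun t => F (Real.exp t) :=
    hF.comp_continuous Real.continuous_exp Real.exp_pos
  have hlim : Tendsto (fun t => F (Real.exp t)) (cocompact ℝ) atTop := by
    rw [cocompact_eq_atBot_atTop]
    exact (h0.comp Real.tendsto_exp_atBot_nhdsGT).sup (htop.comp Real.tendsto_exp_atTop)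
  obtain ⟨t, ht⟩ := hcont.exists_forall_le hlim
  refine ⟨Real.exp t, Real.exp_pos t, fun b hb => ?_⟩
  simpa only [Real.exp_log hb] using ht (Real.log b)

lemma concaveOn_iInf {ι V : Type*} [Nonempty ι] [AddCommMonoid V] [Module ℝ V] {S : Set V}
    {F : ι → V → ℝ} (hF : ∀ i, ConcaveOn ℝ S (F i))
    (hbdd : ∀ x ∈ S, BddBelow (range fun i => F i x)) :
    ConcaveOn ℝ S fun x => ⨅ i, F i x := by
  refine ⟨(hF (Classical.arbitrary ι)).1, fun x hx y hy a b ha hb hab => le_ciInf fun i => ?_⟩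
  exact le_trans (by gcongr <;> exact ciInf_le (hbdd _ ‹_›) i) ((hF i).2 hx hy ha hb hab)

lemma fderiv_mul_sin_div {E : Type*} [NormedAddCommGroup E] [NormedSpace ℝ E]
    (L : E →L[ℝ] ℝ) {ρ : ℝ} (hρ : ρ ≠ 0) (x v : E) :
    fderiv ℝ (fun y => ρ * Real.sin (L y / ρ)) x v = Real.cos (L x / ρ) * L v := by
  have hderiv := ((L.hasFDerivAt (x := x)).mul_const ρ⁻¹).sin.const_mul ρ
  simp only [← div_eq_mul_inv] at hderiv
  rw [hderiv.fderiv]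
  simp only [FunLike.coe_smul, Pi.smul_apply, smul_eq_mul]
  field_simp

section Integrability

variable {X : Type*} [TopologicalSpace X] [MeasurableSpace X] [OpensMeasurableSpace X]
  {μ : Measure X} [IsFiniteMeasureOnCompacts μ] {f : X → ℝ}

lemma integrable_mul_sq_of_hasCompactSupport {g : X → ℝ} (hg : Continuous g) (hf : Continuous f)
    (hfc : HasCompactSupport f) : Integrable (fun x => g x * f x ^ 2) μ := by
  have hf2 : HasCompactSupport fun x => f x ^ 2 :=
    hfc.comp_left (g := fun t : ℝ => t ^ 2) (zero_pow two_ne_zero)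
  exact (hg.mul (hf.pow 2)).integrable_of_hasCompactSupport hf2.mul_left

lemma integrable_sq_of_hasCompactSupport (hf : Continuous f) (hfc : HasCompactSupport f) :
    Integrable (fun x => f x ^ 2) μ := by
  simpa using integrable_mul_sq_of_hasCompactSupport (g := fun _ => 1) continuous_const hf hfc

lemma integrable_norm_fderiv_sq_of_hasCompactSupport {E : Type*} [NormedAddCommGroup E]
    [NormedSpace ℝ E] [MeasurableSpace E] [OpensMeasurableSpace E] {μ : Measure E}
    [IsFiniteMeasureOnCompacts μ] {f : E → ℝ} (hf : ContDiff ℝ 1 f) (hfc : HasCompactSupport f) :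
    Integrable (fun x => ‖fderiv ℝ f x‖ ^ 2) μ :=
  integrable_sq_of_hasCompactSupport (hf.continuous_fderiv one_ne_zero).norm (hfc.fderiv ℝ).norm

end Integrability

section Localization

variable {E : Type*} [NormedAddCommGroup E] [NormedSpace ℝ E] [MeasurableSpace E] [BorelSpace E]
  [FiniteDimensional ℝ E] {μ : Measure E} [μ.IsAddHaarMeasure] {f : E → ℝ}

lemma integral_fderiv_apply_mul_sq {g : E → ℝ} (hg : ContDiff ℝ 1 g) (hf : ContDiff ℝ 1 f)
    (hfc : HasCompactSupport f) (v : E) :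
    ∫ x, fderiv ℝ g x v * f x ^ 2 ∂μ = ∫ x, 2 * f x * -(g x * fderiv ℝ f x v) ∂μ := by
  have hf2 (x : E) : fderiv ℝ (fun y => f y ^ 2) x v = 2 * f x * fderiv ℝ f x v := by
    have := ((hf.differentiable one_ne_zero x).hasFDerivAt.pow 2).fderiv
    simp [this]
  have hg' : Continuous fun x => fderiv ℝ g x v :=
    (hg.continuous_fderiv one_ne_zero).clm_apply continuous_const
  have hf' : Continuous fun x => fderiv ℝ f x v :=
    (hf.continuous_fderiv one_ne_zero).clm_apply continuous_const
  have hint : Integrable (fun x => 2 * f x * fderiv ℝ f x v * g x) μ :=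
    (((continuous_const.mul hf.continuous).mul hf').mul hg.continuous)
      |>.integrable_of_hasCompactSupport hfc.mul_left.mul_right.mul_right
  have hparts := integral_mul_fderiv_eq_neg_fderiv_mul_of_integrable (μ := μ) (v := v)
    (f := fun x => f x ^ 2) (g := g) (by simpa only [hf2] using hint)
    (by simpa only [mul_comm] using
      integrable_mul_sq_of_hasCompactSupport hg' hf.continuous hfc)
    (by simpa only [mul_comm] using
      integrable_mul_sq_of_hasCompactSupport hg.continuous hf.continuous hfc)
    (fun x _ => (hf.pow 2).differentiable one_ne_zero x)
    (fun x _ => hg.differentiable one_ne_zero x)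
  calc ∫ x, fderiv ℝ g x v * f x ^ 2 ∂μ
      = ∫ x, f x ^ 2 * fderiv ℝ g x v ∂μ := by simp only [mul_comm]
    _ = ∫ x, -(2 * f x * fderiv ℝ f x v * g x) ∂μ := by
        simp only [hparts, hf2, integral_neg]
    _ = ∫ x, 2 * f x * -(g x * fderiv ℝ f x v) ∂μ := by
        congr! 2 with x; ring

lemma integral_fderiv_apply_mul_sq_le {g : E → ℝ} (hg : ContDiff ℝ 1 g) {M : ℝ}
    (hM : ∀ x, |g x| ≤ M) (hf : ContDiff ℝ 1 f) (hfc : HasCompactSupport f) (v : E) {ε : ℝ}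
    (hε : 0 < ε) :
    ∫ x, fderiv ℝ g x v * f x ^ 2 ∂μ ≤
      ε * ∫ x, f x ^ 2 ∂μ + ε⁻¹ * (M * ‖v‖) ^ 2 * ∫ x, ‖fderiv ℝ f x‖ ^ 2 ∂μ := by
  have hf' : Continuous fun x => fderiv ℝ f x v :=
    (hf.continuous_fderiv one_ne_zero).clm_apply continuous_const
  have hint : Integrable (fun x => 2 * f x * -(g x * fderiv ℝ f x v)) μ :=
    ((continuous_const.mul hf.continuous).mul (hg.continuous.mul hf').neg)
      |>.integrable_of_hasCompactSupport hfc.mul_left.mul_right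
  have hint₀ := (integrable_sq_of_hasCompactSupport (μ := μ) hf.continuous hfc).const_mul ε
  have hint₁ := (integrable_norm_fderiv_sq_of_hasCompactSupport (μ := μ) hf hfc).const_mul
    (ε⁻¹ * (M * ‖v‖) ^ 2)
  have hsq (x : E) : (g x * fderiv ℝ f x v) ^ 2 ≤ (M * ‖v‖) ^ 2 * ‖fderiv ℝ f x‖ ^ 2 := by
    rw [← mul_pow]
    refine sq_le_sq' (abs_le.1 ?_).1 (abs_le.1 ?_).2 <;>
    calc |g x * fderiv ℝ f x v|
        = |g x| * ‖fderiv ℝ f x v‖ := abs_mul _ _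
      _ ≤ M * (‖fderiv ℝ f x‖ * ‖v‖) :=
          mul_le_mul (hM x) ((fderiv ℝ f x).le_opNorm v) (norm_nonneg _)
            ((abs_nonneg _).trans (hM x))
      _ = M * ‖v‖ * ‖fderiv ℝ f x‖ := by ring
  rw [integral_fderiv_apply_mul_sq hg hf hfc v, ← integral_const_mul, ← integral_const_mul,
    ← integral_add hint₀ hint₁]
  refine integral_mono hint (hint₀.add hint₁) fun x => ?_
  calc 2 * f x * -(g x * fderiv ℝ f x v)
      ≤ ε * f x ^ 2 + ε⁻¹ * (-(g x * fderiv ℝ f x v)) ^ 2 := two_mul_le_add_mul_sq hε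
    _ ≤ ε * f x ^ 2 + ε⁻¹ * ((M * ‖v‖) ^ 2 * ‖fderiv ℝ f x‖ ^ 2) := by
        rw [neg_sq]; gcongr; exact hsq x
    _ = ε * f x ^ 2 + ε⁻¹ * (M * ‖v‖) ^ 2 * ‖fderiv ℝ f x‖ ^ 2 := by ring

variable [Nontrivial E]

theorem integral_sq_le_norm_fderiv_add_compl_closedBall (hf : ContDiff ℝ 1 f)
    (hfc : HasCompactSupport f) {ρ : ℝ} (hρ : 0 < ρ) :
    ∫ x, f x ^ 2 ∂μ ≤ 16 * ρ ^ 2 * ∫ x, ‖fderiv ℝ f x‖ ^ 2 ∂μ +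
      6 * ∫ x in (Metric.closedBall 0 ρ)ᶜ, f x ^ 2 ∂μ := by
  obtain ⟨v, hv⟩ := exists_norm_eq E zero_le_one
  obtain ⟨L, hL, hLv⟩ := exists_dual_vector ℝ v (by simp [hv])
  have hint := integrable_sq_of_hasCompactSupport (μ := μ) hf.continuous hfc
  have hcos : Integrable (fun x => Real.cos (L x / ρ) * f x ^ 2) μ :=
    integrable_mul_sq_of_hasCompactSupport (by fun_prop) hf.continuous hfc
  have hball : MeasurableSet (Metric.closedBall (0 : E) ρ)ᶜ :=
    Metric.isClosed_closedBall.measurableSet.compl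
  have hout := hint.indicator hball
  have hupper : ∫ x, Real.cos (L x / ρ) * f x ^ 2 ∂μ ≤
      4⁻¹ * ∫ x, f x ^ 2 ∂μ + 4 * ρ ^ 2 * ∫ x, ‖fderiv ℝ f x‖ ^ 2 ∂μ := by
    have hbound (x : E) : |ρ * Real.sin (L x / ρ)| ≤ ρ := by
      rw [abs_mul, abs_of_pos hρ]
      exact mul_le_of_le_one_right hρ.le (Real.abs_sin_le_one _)
    simpa [fderiv_mul_sin_div L hρ.ne', hLv, hv] using
      integral_fderiv_apply_mul_sq_le (μ := μ) (g := fun x => ρ * Real.sin (L x / ρ))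
        (by fun_prop) hbound hf hfc v (ε := 4⁻¹) (by norm_num)
  have hlower : 2⁻¹ * ∫ x, f x ^ 2 ∂μ ≤ ∫ x, Real.cos (L x / ρ) * f x ^ 2 ∂μ +
      3 / 2 * ∫ x in (Metric.closedBall 0 ρ)ᶜ, f x ^ 2 ∂μ := by
    rw [← integral_indicator hball, ← integral_const_mul, ← integral_const_mul,
      ← integral_add hcos (hout.const_mul _)]
    refine integral_mono (hint.const_mul _) (hcos.add (hout.const_mul _)) fun x => ?_
    by_cases hx : x ∈ Metric.closedBall (0 : E) ρ
    · have hLx : |L x / ρ| ≤ 1 := by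
        rw [abs_div, abs_of_pos hρ, div_le_one hρ]
        exact (L.le_of_opNorm_le hL.le x).trans (by simpa using hx)
      have := mul_le_mul_of_nonneg_right (one_half_le_cos_of_abs_le_one hLx) (sq_nonneg (f x))
      simpa [hx] using this
    · have := mul_le_mul_of_nonneg_right (Real.neg_one_le_cos (L x / ρ)) (sq_nonneg (f x))
      simp only [indicator_of_mem (mem_compl hx)]
      linarith
  linarith

theorem integral_sq_le_norm_fderiv_of_support_subset_closedBall (hf : ContDiff ℝ 1 f)
    (hfc : HasCompactSupport f) {r : ℝ} (hr : 0 < r)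
    (hsupp : Function.support f ⊆ Metric.closedBall 0 r) :
    ∫ x, f x ^ 2 ∂μ ≤ 16 * r ^ 2 * ∫ x, ‖fderiv ℝ f x‖ ^ 2 ∂μ := by
  have hzero : ∫ x in (Metric.closedBall 0 r)ᶜ, f x ^ 2 ∂μ = 0 :=
    setIntegral_eq_zero_of_forall_eq_zero fun x hx => by
      simp [Function.notMem_support.1 fun hfx => hx (hsupp hfx)]
  simpa [hzero] using integral_sq_le_norm_fderiv_add_compl_closedBall (μ := μ) hf hfc hr

theorem integral_sq_le_norm_fderiv_add_rpow_norm (hf : ContDiff ℝ 1 f)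
    (hfc : HasCompactSupport f) {ρ p : ℝ} (hρ : 0 < ρ) (hp : 0 ≤ p) :
    ∫ x, f x ^ 2 ∂μ ≤ 16 * ρ ^ 2 * ∫ x, ‖fderiv ℝ f x‖ ^ 2 ∂μ +
      6 * (ρ ^ (-p) * ∫ x, ‖x‖ ^ p * f x ^ 2 ∂μ) := by
  have hmoment : Integrable (fun x => ρ ^ (-p) * (‖x‖ ^ p * f x ^ 2)) μ :=
    (integrable_mul_sq_of_hasCompactSupport
      (continuous_norm.rpow_const fun _ => Or.inr hp) hf.continuous hfc).const_mul _
  have hout : ∫ x in (Metric.closedBall 0 ρ)ᶜ, f x ^ 2 ∂μ ≤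
      ρ ^ (-p) * ∫ x, ‖x‖ ^ p * f x ^ 2 ∂μ := by
    rw [← integral_const_mul]
    refine (setIntegral_mono_on
      (integrable_sq_of_hasCompactSupport hf.continuous hfc).integrableOn hmoment.integrableOn
      Metric.isClosed_closedBall.measurableSet.compl fun x hx => ?_).trans
      (setIntegral_le_integral hmoment (.of_forall fun x => by positivity))
    have hρx : ρ ≤ ‖x‖ := by
      simpa using (not_le.1 fun h => hx (mem_closedBall_zero_iff.2 h)).le
    have hweight : 1 ≤ ρ ^ (-p) * ‖x‖ ^ p := by
      rw [Real.rpow_neg hρ.le, inv_mul_eq_div, one_le_div (by positivity)]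
      exact Real.rpow_le_rpow hρ.le hρx hp
    rw [← mul_assoc]
    exact le_mul_of_one_le_left (sq_nonneg _) hweight
  linarith [integral_sq_le_norm_fderiv_add_compl_closedBall (μ := μ) hf hfc hρ]

theorem rpow_mul_integral_sq_le (hf : ContDiff ℝ 1 f) (hfc : HasCompactSupport f) {s σ : ℝ}
    (hs : 0 ≤ s) (hσ : 0 < σ) :
    σ ^ (1 / (1 + s)) * ∫ x, f x ^ 2 ∂μ ≤
      16 * (∫ x, ‖fderiv ℝ f x‖ ^ 2 ∂μ + σ * ∫ x, ‖x‖ ^ (2 * s) * f x ^ 2 ∂μ) := by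
  -- The scale at which `ρ ^ 2` and `ρ ^ (-2s) / σ` balance.
  set ρ : ℝ := σ ^ (-(1 / (2 * (1 + s)))) with hρ
  have hρ2 : σ ^ (1 / (1 + s)) * ρ ^ 2 = 1 := by
    rw [hρ, ← Real.rpow_mul_natCast hσ.le, ← Real.rpow_add hσ]
    convert Real.rpow_zero σ using 2
    push_cast
    field_simp
    norm_num
  have hρs : σ ^ (1 / (1 + s)) * ρ ^ (-(2 * s)) = σ := by
    rw [hρ, ← Real.rpow_mul hσ.le, ← Real.rpow_add hσ]
    convert Real.rpow_one σ using 2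
    field_simp
  have hmoment : 0 ≤ σ * ∫ x, ‖x‖ ^ (2 * s) * f x ^ 2 ∂μ :=
    mul_nonneg hσ.le (integral_nonneg fun x => by positivity)
  calc σ ^ (1 / (1 + s)) * ∫ x, f x ^ 2 ∂μ
      ≤ σ ^ (1 / (1 + s)) * (16 * ρ ^ 2 * ∫ x, ‖fderiv ℝ f x‖ ^ 2 ∂μ +
          6 * (ρ ^ (-(2 * s)) * ∫ x, ‖x‖ ^ (2 * s) * f x ^ 2 ∂μ)) := by
        gcongr
        exact integral_sq_le_norm_fderiv_add_rpow_norm hf hfc (by positivity) (by positivity)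
    _ = 16 * (σ ^ (1 / (1 + s)) * ρ ^ 2) * ∫ x, ‖fderiv ℝ f x‖ ^ 2 ∂μ +
          6 * (σ ^ (1 / (1 + s)) * ρ ^ (-(2 * s)) * ∫ x, ‖x‖ ^ (2 * s) * f x ^ 2 ∂μ) := by ring
    _ ≤ 16 * (∫ x, ‖fderiv ℝ f x‖ ^ 2 ∂μ + σ * ∫ x, ‖x‖ ^ (2 * s) * f x ^ 2 ∂μ) := by
        rw [hρ2, hρs]
        linarith

end Localization

section RayleighQuotient

variable {E : Type*} [NormedAddCommGroup E] [NormedSpace ℝ E]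

/-- The nonzero smooth functions with compact support in `Ω`, over which the Rayleigh quotient is
minimized. -/
structure IsTrialFunction (Ω : Set E) (f : E → ℝ) : Prop where
  contDiff : ContDiff ℝ (⊤ : ℕ∞) f
  hasCompactSupport : HasCompactSupport f
  tsupport_subset : tsupport f ⊆ Ω
  ne_zero : f ≠ 0

/-- The Rayleigh quotient of `-Δ + σ ‖x‖ ^ (2s)` at `f`, with integrals over the whole space so that
it does not depend on the domain containing the support of `f`. -/
noncomputable def rayleighQuotient [MeasurableSpace E] (μ : Measure E) (s σ : ℝ) (f : E → ℝ) : ℝ :=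
  (∫ x, ‖fderiv ℝ f x‖ ^ 2 ∂μ + σ * ∫ x, ‖x‖ ^ (2 * s) * f x ^ 2 ∂μ) / ∫ x, f x ^ 2 ∂μ

variable {Ω : Set E} {f : E → ℝ}

lemma IsTrialFunction.contDiff_one (hf : IsTrialFunction Ω f) : ContDiff ℝ 1 f :=
  hf.contDiff.of_le (by exact_mod_cast le_top)

lemma IsTrialFunction.eq_zero_of_notMem (hf : IsTrialFunction Ω f) {x : E} (hx : x ∉ Ω) :
    f x = 0 :=
  image_eq_zero_of_notMem_tsupport fun h => hx (hf.tsupport_subset h)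

lemma IsTrialFunction.fderiv_eq_zero_of_notMem (hf : IsTrialFunction Ω f) {x : E} (hx : x ∉ Ω) :
    fderiv ℝ f x = 0 :=
  Function.notMem_support.1 fun h => hx (hf.tsupport_subset (support_fderiv_subset ℝ h))

lemma nonempty_isTrialFunction [FiniteDimensional ℝ E] (hΩ : (interior Ω).Nonempty) :
    Nonempty {f : E → ℝ // IsTrialFunction Ω f} := by
  obtain ⟨x, hx⟩ := hΩ
  obtain ⟨f, hsupp, hcompact, hsmooth, -, hfx⟩ :=
    exists_contDiff_tsupport_subset (n := (⊤ : ℕ∞)) (mem_interior_iff_mem_nhds.1 hx)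
  exact ⟨f, hsmooth, hcompact, hsupp, fun h => by simp [h] at hfx⟩

variable [MeasurableSpace E] {μ : Measure E} {s σ : ℝ}

lemma rayleighQuotient_nonneg (hσ : 0 ≤ σ) : 0 ≤ rayleighQuotient μ s σ f :=
  div_nonneg (add_nonneg (integral_nonneg fun x => by positivity)
    (mul_nonneg hσ (integral_nonneg fun x => by positivity))) (integral_nonneg fun x => sq_nonneg _)

lemma concaveOn_rayleighQuotient {S : Set ℝ} (hS : Convex ℝ S) :
    ConcaveOn ℝ S fun σ => rayleighQuotient μ s σ f := by
  refine ⟨hS, fun x _ y _ a b _ _ hab => le_of_eq ?_⟩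
  obtain rfl := eq_sub_of_add_eq hab
  simp only [rayleighQuotient, smul_eq_mul]
  ring

lemma IsTrialFunction.integral_sq_pos [OpensMeasurableSpace E] [IsFiniteMeasureOnCompacts μ]
    [μ.IsOpenPosMeasure] (hf : IsTrialFunction Ω f) : 0 < ∫ x, f x ^ 2 ∂μ := by
  obtain ⟨x, hx⟩ := Function.ne_iff.1 hf.ne_zero
  have hfc : HasCompactSupport fun x => f x ^ 2 :=
    hf.hasCompactSupport.comp_left (g := fun t : ℝ => t ^ 2) (zero_pow two_ne_zero)
  exact (hf.contDiff.continuous.pow 2).integral_pos_of_hasCompactSupport_nonneg_nonzero hfc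
    (fun x => sq_nonneg _) (pow_ne_zero 2 hx)

variable [BorelSpace E] [FiniteDimensional ℝ E] [μ.IsAddHaarMeasure] [Nontrivial E]

lemma IsTrialFunction.inv_le_rayleighQuotient (hf : IsTrialFunction Ω f) {r : ℝ} (hr : 0 < r)
    (hΩ : Ω ⊆ Metric.closedBall 0 r) (hσ : 0 ≤ σ) :
    (16 * r ^ 2)⁻¹ ≤ rayleighQuotient μ s σ f := by
  have hpoincare := integral_sq_le_norm_fderiv_of_support_subset_closedBall (μ := μ)
    hf.contDiff_one hf.hasCompactSupport hr
    ((subset_tsupport f).trans (hf.tsupport_subset.trans hΩ))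
  have hmoment : 0 ≤ σ * ∫ x, ‖x‖ ^ (2 * s) * f x ^ 2 ∂μ :=
    mul_nonneg hσ (integral_nonneg fun x => by positivity)
  rw [rayleighQuotient, le_div_iff₀ hf.integral_sq_pos, inv_mul_le_iff₀ (by positivity)]
  exact hpoincare.trans (by gcongr; linarith)

lemma IsTrialFunction.rpow_div_le_rayleighQuotient (hf : IsTrialFunction Ω f) (hs : 0 ≤ s)
    (hσ : 0 < σ) : σ ^ (1 / (1 + s)) / 16 ≤ rayleighQuotient μ s σ f := by
  rw [rayleighQuotient, div_le_div_iff₀ (by norm_num) hf.integral_sq_pos, mul_comm _ (16 : ℝ)]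
  exact rpow_mul_integral_sq_le hf.contDiff_one hf.hasCompactSupport hs hσ

end RayleighQuotient

section SchrodingerE1

variable {d : ℕ} {s σ : ℝ} {Ω : Set (EuclideanSpace ℝ (Fin d))}

lemma IsTrialFunction.setIntegral_div_eq_rayleighQuotient {f : EuclideanSpace ℝ (Fin d) → ℝ}
    (hf : IsTrialFunction Ω f) (hs : 0 ≤ s) :
    (∫ x in Ω, (‖gradient f x‖ ^ 2 + σ * ‖x‖ ^ (2 * s) * f x ^ 2)) / (∫ x in Ω, f x ^ 2) =
      rayleighQuotient volume s σ f := by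
  have hnorm (x) : ‖gradient f x‖ = ‖fderiv ℝ f x‖ := by simp [gradient]
  have hpot : Integrable fun x => σ * (‖x‖ ^ (2 * s) * f x ^ 2) :=
    (integrable_mul_sq_of_hasCompactSupport
      (continuous_norm.rpow_const fun _ => Or.inr (by positivity)) hf.contDiff.continuous
      hf.hasCompactSupport).const_mul σ
  simp only [hnorm, mul_assoc]
  rw [setIntegral_eq_integral_of_forall_compl_eq_zero fun x hx => by
      simp [hf.eq_zero_of_notMem hx, hf.fderiv_eq_zero_of_notMem hx],
    setIntegral_eq_integral_of_forall_compl_eq_zero fun x hx => by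
      simp [hf.eq_zero_of_notMem hx],
    integral_add (integrable_norm_fderiv_sq_of_hasCompactSupport hf.contDiff_one
      hf.hasCompactSupport) hpot, integral_const_mul, rayleighQuotient]

lemma schrodingerE1_eq_iInf (hs : 0 ≤ s) :
    schrodingerE1 d s σ Ω = ⨅ f : {f // IsTrialFunction Ω f}, rayleighQuotient volume s σ f.1 := by
  rw [schrodingerE1, iInf]
  congr 1
  ext q
  constructor
  · rintro ⟨f, hsmooth, hcompact, hsupp, hne, rfl⟩
    have hf : IsTrialFunction Ω f := ⟨hsmooth, hcompact, hsupp, hne⟩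
    exact ⟨⟨f, hf⟩, (hf.setIntegral_div_eq_rayleighQuotient hs).symm⟩
  · rintro ⟨⟨f, hf⟩, rfl⟩
    exact ⟨f, hf.contDiff, hf.hasCompactSupport, hf.tsupport_subset, hf.ne_zero,
      (hf.setIntegral_div_eq_rayleighQuotient hs).symm⟩

lemma inv_le_schrodingerE1 [NeZero d] (hΩ : (interior Ω).Nonempty) {r : ℝ} (hr : 0 < r)
    (hΩr : Ω ⊆ Metric.closedBall 0 r) (hs : 0 ≤ s) (hσ : 0 ≤ σ) :
    (16 * r ^ 2)⁻¹ ≤ schrodingerE1 d s σ Ω := by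
  have := nonempty_isTrialFunction hΩ
  rw [schrodingerE1_eq_iInf hs]
  exact le_ciInf fun f => f.2.inv_le_rayleighQuotient hr hΩr hσ

lemma rpow_div_le_schrodingerE1 [NeZero d] (hΩ : (interior Ω).Nonempty) (hs : 0 ≤ s)
    (hσ : 0 < σ) : σ ^ (1 / (1 + s)) / 16 ≤ schrodingerE1 d s σ Ω := by
  have := nonempty_isTrialFunction hΩ
  rw [schrodingerE1_eq_iInf hs]
  exact le_ciInf fun f => f.2.rpow_div_le_rayleighQuotient hs hσ

lemma concaveOn_schrodingerE1 (hΩ : (interior Ω).Nonempty) (hs : 0 ≤ s) :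
    ConcaveOn ℝ (Ici 0) fun σ => schrodingerE1 d s σ Ω := by
  have := nonempty_isTrialFunction hΩ
  simp only [schrodingerE1_eq_iInf hs]
  refine concaveOn_iInf (fun f => concaveOn_rayleighQuotient (convex_Ici 0)) fun σ hσ => ⟨0, ?_⟩
  rintro _ ⟨f, rfl⟩
  exact rayleighQuotient_nonneg hσ

lemma continuousOn_schrodingerE1 (hΩ : (interior Ω).Nonempty) (hs : 0 ≤ s) :
    ContinuousOn (fun σ => schrodingerE1 d s σ Ω) (Ioi 0) :=
  ((concaveOn_schrodingerE1 hΩ hs).subset Ioi_subset_Ici_self (convex_Ioi 0)).continuousOn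
    isOpen_Ioi

variable {α : ℝ}

lemma tendsto_rpow_mul_schrodingerE1_nhdsGT_zero [NeZero d] (hΩ : (interior Ω).Nonempty)
    (hbdd : Bornology.IsBounded Ω) (hs : 0 ≤ s) (hα : α < 0) :
    Tendsto (fun σ => σ ^ α * schrodingerE1 d s σ Ω) (nhdsWithin 0 (Ioi 0)) atTop := by
  obtain ⟨r, hr, hΩr⟩ := hbdd.subset_closedBall_lt 0 0
  have hlim := (tendsto_rpow_neg_nhdsGT_zero hα).atTop_mul_const
    (show 0 < (16 * r ^ 2)⁻¹ by positivity)
  refine tendsto_atTop_mono' _ ?_ hlim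
  filter_upwards [self_mem_nhdsWithin] with σ (hσ : 0 < σ)
  gcongr
  exact inv_le_schrodingerE1 hΩ hr hΩr hs hσ.le

lemma tendsto_rpow_mul_schrodingerE1_atTop [NeZero d] (hΩ : (interior Ω).Nonempty)
    (hs : 0 ≤ s) (hα : -(1 / (1 + s)) < α) :
    Tendsto (fun σ => σ ^ α * schrodingerE1 d s σ Ω) atTop atTop := by
  have hlim := (tendsto_rpow_atTop (neg_lt_iff_pos_add.1 hα)).atTop_div_const
    (show (0 : ℝ) < 16 by norm_num)
  refine tendsto_atTop_mono' _ ?_ hlim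
  filter_upwards [eventually_gt_atTop 0] with σ hσ
  rw [Real.rpow_add hσ, mul_div_assoc]
  gcongr
  exact rpow_div_le_schrodingerE1 hΩ hs hσ

end SchrodingerE1

theorem rescaled_E1_attains_min_general {d : ℕ} [NeZero d] {s α : ℝ} (hs : 0 ≤ s)
    (hα_neg : α < 0) (hα : -(1 / (1 + s)) < α) {Ω : Set (EuclideanSpace ℝ (Fin d))}
    (hΩ : (interior Ω).Nonempty) (hbdd : Bornology.IsBounded Ω) :
    Tendsto (fun σ => σ ^ α * schrodingerE1 d s σ Ω) (nhdsWithin 0 (Ioi 0)) atTop ∧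
    Tendsto (fun σ => σ ^ α * schrodingerE1 d s σ Ω) atTop atTop ∧
    ∃ σstar, 0 < σstar ∧ ∀ σ, 0 < σ →
      σstar ^ α * schrodingerE1 d s σstar Ω ≤ σ ^ α * schrodingerE1 d s σ Ω := by
  have hzero := tendsto_rpow_mul_schrodingerE1_nhdsGT_zero hΩ hbdd hs hα_neg
  have htop := tendsto_rpow_mul_schrodingerE1_atTop hΩ hs hα
  have hcont : ContinuousOn (fun σ => σ ^ α * schrodingerE1 d s σ Ω) (Ioi 0) :=
    (continuousOn_id.rpow_const fun σ hσ => Or.inl (ne_of_gt hσ)).mul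
      (continuousOn_schrodingerE1 hΩ hs)
  exact ⟨hzero, htop, exists_forall_Ioi_le_of_tendsto_atTop hcont hzero htop⟩

/-- the function `F(σ) = σ^{-d₂/(d₁+(1+s)d₂)} E₁(σ, B₁)` blows up as
`σ → 0⁺` and as `σ → +∞`, and attains a global minimum on `(0,∞)`.  Here `B₁` is the
ball in `ℝ^{d₁}` of volume `1` centered at the origin. -/
theorem rescaled_E1_attains_min (d₁ d₂ : ℕ) (hd₁ : 1 ≤ d₁) (hd₂ : 1 ≤ d₂)
    (s : ℝ) (hs : 0 < s)
    (r₁ : ℝ) (hr₁ : 0 < r₁)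
    (hB₁ : volume (Metric.ball (0 : EuclideanSpace ℝ (Fin d₁)) r₁) = 1) :
    (Filter.Tendsto
        (fun σ : ℝ => σ ^ (-(d₂ : ℝ) / ((d₁ : ℝ) + (1 + s) * (d₂ : ℝ))) *
          schrodingerE1 d₁ s σ (Metric.ball (0 : EuclideanSpace ℝ (Fin d₁)) r₁))
        (nhdsWithin 0 (Set.Ioi 0)) Filter.atTop) ∧
    (Filter.Tendsto
        (fun σ : ℝ => σ ^ (-(d₂ : ℝ) / ((d₁ : ℝ) + (1 + s) * (d₂ : ℝ))) *
          schrodingerE1 d₁ s σ (Metric.ball (0 : EuclideanSpace ℝ (Fin d₁)) r₁))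
        Filter.atTop Filter.atTop) ∧
    (∃ σstar : ℝ, 0 < σstar ∧ ∀ σ : ℝ, 0 < σ →
      σstar ^ (-(d₂ : ℝ) / ((d₁ : ℝ) + (1 + s) * (d₂ : ℝ))) *
          schrodingerE1 d₁ s σstar (Metric.ball (0 : EuclideanSpace ℝ (Fin d₁)) r₁) ≤
        σ ^ (-(d₂ : ℝ) / ((d₁ : ℝ) + (1 + s) * (d₂ : ℝ))) *
          schrodingerE1 d₁ s σ (Metric.ball (0 : EuclideanSpace ℝ (Fin d₁)) r₁)) := by
  have : NeZero d₁ := ⟨by lia⟩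
  have hd₁_pos : (0 : ℝ) < d₁ := by exact_mod_cast hd₁
  have hd₂_pos : (0 : ℝ) < d₂ := by exact_mod_cast hd₂
  have hball : (interior (Metric.ball (0 : EuclideanSpace ℝ (Fin d₁)) r₁)).Nonempty := by
    simpa [Metric.isOpen_ball.interior_eq] using hr₁
  exact rescaled_E1_attains_min_general hs.le
    (div_neg_of_neg_of_pos (neg_lt_zero.2 hd₂_pos) (by positivity))
    (neg_one_div_lt_neg_div_add_mul hd₁_pos hd₂_pos (by positivity)) hball Metric.isBounded_ball
end
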